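/- Let m : ℝ² → ℝ be a smooth function of (x,t) satisfying the KdV equation m_t + m_xxx − 6m·m_x = 0, let λ ∈ ℝ, and let ψ : ℝ² → ℝ be a smooth function satisfying ψ_xx = (m − λ)ψ at every point of ℝ². Then the function W := ψ_t − (2m + 4λ)ψ_x + m_x·ψ also satisfies W_xx = (m − λ)W at every point of ℝ². -/

import Mathlib

noncomputable section

/-- Partial derivative of `f` with respect to its first argument. -/
def d1 (f : ℝ → ℝ → ℝ) : ℝ → ℝ → ℝ := fun a b => deriv (fun a' => f a' b) a

/-- Partial derivative of `f` with respect to its second argument. -/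
def d2 (f : ℝ → ℝ → ℝ) : ℝ → ℝ → ℝ := fun a b => deriv (fun b' => f a b') b

/-- Smoothness of a two-variable real function. -/
def Smooth2 (f : ℝ → ℝ → ℝ) : Prop := ContDiff ℝ (⊤ : ℕ∞) (fun p : ℝ × ℝ => f p.1 p.2)

/-!
The spatial operator `(2m + 4λ)∂ₓ - mₓ` of the Lax pair is twice the Lie derivative along the
vector field `b ∂ₓ`, `b = m + 2λ`, acting on densities of weight `-1/2`. On solutions of `y'' = q y`
the operator `∂ₓ² - q` sends `2b y' - b' y` to `(4b'q + 2bq' - b''') y`, and it sends `yₜ` to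
`qₜ y`. For `q = m - λ` the difference of the two factors is `mₜ + mₓₓₓ - 6m mₓ`, from which `λ` has
disappeared.
-/

open Function (uncurry)

section PartialDerivatives

variable {f : ℝ → ℝ → ℝ}

theorem differentiable_fst_slice (hf : Differentiable ℝ (uncurry f)) (t : ℝ) :
    Differentiable ℝ (fun x => f x t) :=
  hf.comp (differentiable_id.prodMk (differentiable_const t))

theorem differentiable_snd_slice (hf : Differentiable ℝ (uncurry f)) (x : ℝ) :
    Differentiable ℝ (f x) :=
  hf.comp ((differentiable_const x).prodMk differentiable_id)

theorem uncurry_d1_eq_fderiv_apply (hf : Differentiable ℝ (uncurry f)) :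
    uncurry (d1 f) = fun p => fderiv ℝ (uncurry f) p (1, 0) := by
  funext ⟨x, t⟩
  exact ((hf (x, t)).hasFDerivAt.comp_hasDerivAt x
    ((hasDerivAt_id x).prodMk (hasDerivAt_const x t))).deriv

theorem uncurry_d2_eq_fderiv_apply (hf : Differentiable ℝ (uncurry f)) :
    uncurry (d2 f) = fun p => fderiv ℝ (uncurry f) p (0, 1) := by
  funext ⟨x, t⟩
  exact ((hf (x, t)).hasFDerivAt.comp_hasDerivAt t
    ((hasDerivAt_const t x).prodMk (hasDerivAt_id t))).deriv

variable {k n : WithTop ℕ∞}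

theorem contDiff_uncurry_d1 (hf : ContDiff ℝ n (uncurry f)) (hkn : k + 1 ≤ n) :
    ContDiff ℝ k (uncurry (d1 f)) := by
  rw [uncurry_d1_eq_fderiv_apply
    ((hf.of_le (le_add_self.trans hkn)).differentiable one_ne_zero)]
  exact (hf.fderiv_right hkn).clm_apply contDiff_const

theorem contDiff_uncurry_d2 (hf : ContDiff ℝ n (uncurry f)) (hkn : k + 1 ≤ n) :
    ContDiff ℝ k (uncurry (d2 f)) := by
  rw [uncurry_d2_eq_fderiv_apply
    ((hf.of_le (le_add_self.trans hkn)).differentiable one_ne_zero)]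
  exact (hf.fderiv_right hkn).clm_apply contDiff_const

theorem d1_d2_comm (hf : ContDiff ℝ 2 (uncurry f)) : d1 (d2 f) = d2 (d1 f) := by
  have hdf : Differentiable ℝ (uncurry f) := hf.differentiable two_ne_zero
  have hd1 : Differentiable ℝ (uncurry (d1 f)) :=
    (contDiff_uncurry_d1 hf one_add_one_eq_two.le).differentiable one_ne_zero
  have hd2 : Differentiable ℝ (uncurry (d2 f)) :=
    (contDiff_uncurry_d2 hf one_add_one_eq_two.le).differentiable one_ne_zero
  have hfderiv : Differentiable ℝ (fderiv ℝ (uncurry f)) :=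
    (hf.fderiv_right one_add_one_eq_two.le).differentiable one_ne_zero
  have fderiv_fderiv_apply (p v w : ℝ × ℝ) :
      fderiv ℝ (fun p => fderiv ℝ (uncurry f) p v) p w
        = fderiv ℝ (fderiv ℝ (uncurry f)) p w v := by
    simp [fderiv_clm_apply (hfderiv p) (differentiableAt_const v)]
  apply Function.uncurry_injective
  rw [uncurry_d1_eq_fderiv_apply hd2, uncurry_d2_eq_fderiv_apply hd1,
    uncurry_d1_eq_fderiv_apply hdf, uncurry_d2_eq_fderiv_apply hdf]
  funext p
  rw [fderiv_fderiv_apply, fderiv_fderiv_apply]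
  exact (hf.contDiffAt.isSymmSndFDerivAt (by simp)).eq _ _

theorem d1_d1_d2_comm (hf : ContDiff ℝ 3 (uncurry f)) : d1 (d1 (d2 f)) = d2 (d1 (d1 f)) := by
  rw [d1_d2_comm (hf.of_le (by norm_num)),
    d1_d2_comm (contDiff_uncurry_d1 hf two_add_one_eq_three.le)]

end PartialDerivatives

section HalfDensity

variable {𝕜 : Type*} [NontriviallyNormedField 𝕜] {b q y : 𝕜 → 𝕜}

/-- Twice the Lie derivative of the density `y` of weight `-1/2` along the vector field `b ∂ₓ`. The
factor two avoids a division, so that the definition makes sense in every characteristic. -/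
def twoLieHalfDensity (b y : 𝕜 → 𝕜) : 𝕜 → 𝕜 :=
  fun x => 2 * b x * deriv y x - deriv b x * y x

theorem hasDerivAt_twoLieHalfDensity {x : 𝕜} (hb : DifferentiableAt 𝕜 b x)
    (hb' : DifferentiableAt 𝕜 (deriv b) x) (hy : DifferentiableAt 𝕜 y x)
    (hy' : DifferentiableAt 𝕜 (deriv y) x) (hode : deriv (deriv y) x = q x * y x) :
    HasDerivAt (twoLieHalfDensity b y)
      (deriv b x * deriv y x + (2 * b x * q x - deriv (deriv b) x) * y x) x := by
  refine (((hb.hasDerivAt.const_mul 2).mul hy'.hasDerivAt).sub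
    (hb'.hasDerivAt.mul hy.hasDerivAt)).congr_deriv ?_
  rw [hode]
  ring

theorem hasDerivAt_deriv_twoLieHalfDensity (hb : Differentiable 𝕜 b)
    (hb' : Differentiable 𝕜 (deriv b)) (hb'' : Differentiable 𝕜 (deriv (deriv b)))
    (hq : Differentiable 𝕜 q) (hy : Differentiable 𝕜 y) (hy' : Differentiable 𝕜 (deriv y))
    (hode : ∀ x, deriv (deriv y) x = q x * y x) (x : 𝕜) :
    HasDerivAt (deriv (twoLieHalfDensity b y))
      (q x * twoLieHalfDensity b y x
        + (4 * deriv b x * q x + 2 * b x * deriv q x - deriv (deriv (deriv b)) x) * y x) x := by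
  have hderiv : deriv (twoLieHalfDensity b y)
      = fun x => deriv b x * deriv y x + (2 * b x * q x - deriv (deriv b) x) * y x :=
    funext fun x => (hasDerivAt_twoLieHalfDensity (hb x) (hb' x) (hy x) (hy' x) (hode x)).deriv
  rw [hderiv]
  refine (((hb' x).hasDerivAt.mul (hy' x).hasDerivAt).add
    (((((hb x).hasDerivAt.const_mul 2).mul (hq x).hasDerivAt).sub (hb'' x).hasDerivAt).mul
      (hy x).hasDerivAt)).congr_deriv ?_
  simp only [hode, twoLieHalfDensity, Pi.mul_apply, Pi.sub_apply]
  ring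

end HalfDensity

theorem d1_d1_d2_of_d1_d1_eq_mul {q ψ : ℝ → ℝ → ℝ} (hq : Differentiable ℝ (uncurry q))
    (hψ : ContDiff ℝ 3 (uncurry ψ)) (hspec : ∀ x t, d1 (d1 ψ) x t = q x t * ψ x t) (x t : ℝ) :
    d1 (d1 (d2 ψ)) x t = d2 q x t * ψ x t + q x t * d2 ψ x t := by
  rw [d1_d1_d2_comm hψ, show d1 (d1 ψ) = fun x t => q x t * ψ x t from funext₂ hspec]
  exact deriv_fun_mul (differentiable_snd_slice hq x t)
    (differentiable_snd_slice (hψ.differentiable three_ne_zero) x t)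

theorem d1_d1_d2_sub_twoLieHalfDensity {b q ψ : ℝ → ℝ → ℝ} (hb : ContDiff ℝ 3 (uncurry b))
    (hq : Differentiable ℝ (uncurry q)) (hψ : ContDiff ℝ 3 (uncurry ψ))
    (hspec : ∀ x t, d1 (d1 ψ) x t = q x t * ψ x t) (x t : ℝ) :
    d1 (d1 fun x t => d2 ψ x t - twoLieHalfDensity (b · t) (ψ · t) x) x t
      = q x t * (d2 ψ x t - twoLieHalfDensity (b · t) (ψ · t) x)
        + (d2 q x t - 4 * d1 b x t * q x t - 2 * b x t * d1 q x t + d1 (d1 (d1 b)) x t)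
          * ψ x t := by
  have hbx : ContDiff ℝ 2 (uncurry (d1 b)) := contDiff_uncurry_d1 hb two_add_one_eq_three.le
  have hbxx : ContDiff ℝ 1 (uncurry (d1 (d1 b))) := contDiff_uncurry_d1 hbx one_add_one_eq_two.le
  have hψx : ContDiff ℝ 2 (uncurry (d1 ψ)) := contDiff_uncurry_d1 hψ two_add_one_eq_three.le
  have hψt : ContDiff ℝ 2 (uncurry (d2 ψ)) := contDiff_uncurry_d2 hψ two_add_one_eq_three.le
  have hψtx : ContDiff ℝ 1 (uncurry (d1 (d2 ψ))) := contDiff_uncurry_d1 hψt one_add_one_eq_two.le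
  have hb_slice := differentiable_fst_slice (hb.differentiable three_ne_zero) t
  have hbx_slice := differentiable_fst_slice (hbx.differentiable two_ne_zero) t
  have hbxx_slice := differentiable_fst_slice (hbxx.differentiable one_ne_zero) t
  have hψ_slice := differentiable_fst_slice (hψ.differentiable three_ne_zero) t
  have hψx_slice := differentiable_fst_slice (hψx.differentiable two_ne_zero) t
  have hψt_slice := differentiable_fst_slice (hψt.differentiable two_ne_zero) t
  have hψtx_slice := differentiable_fst_slice (hψtx.differentiable one_ne_zero) t
  have hLie := hasDerivAt_deriv_twoLieHalfDensity hb_slice hbx_slice hbxx_slice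
    (differentiable_fst_slice hq t) hψ_slice hψx_slice (hspec · t) x
  have hderiv : deriv (fun x => d2 ψ x t - twoLieHalfDensity (b · t) (ψ · t) x)
      = fun x => d1 (d2 ψ) x t - deriv (twoLieHalfDensity (b · t) (ψ · t)) x :=
    funext fun x => deriv_fun_sub (hψt_slice x) (hasDerivAt_twoLieHalfDensity (q := (q · t))
      (hb_slice x) (hbx_slice x) (hψ_slice x) (hψx_slice x) (hspec x t)).differentiableAt
  calc
    _ = d1 (d1 (d2 ψ)) x t - deriv (deriv (twoLieHalfDensity (b · t) (ψ · t))) x :=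
      (congrArg (deriv · x) hderiv).trans (deriv_fun_sub (hψtx_slice x) hLie.differentiableAt)
    _ = _ := by
      rw [d1_d1_d2_of_d1_d1_eq_mul hq hψ hspec, hLie.deriv]
      simp only [d1]
      ring

theorem KdV_Lax_compatibility_general {m ψ : ℝ → ℝ → ℝ} {lam : ℝ}
    (hm : ContDiff ℝ 3 (uncurry m)) (hψ : ContDiff ℝ 3 (uncurry ψ))
    (hspec : ∀ x t, d1 (d1 ψ) x t = (m x t - lam) * ψ x t) (x t : ℝ) :
    d1 (d1 (fun x t =>
        d2 ψ x t - (2 * m x t + 4 * lam) * d1 ψ x t + d1 m x t * ψ x t)) x t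
      = (m x t - lam) *
          (d2 ψ x t - (2 * m x t + 4 * lam) * d1 ψ x t + d1 m x t * ψ x t)
        + (d2 m x t + d1 (d1 (d1 m)) x t - 6 * m x t * d1 m x t) * ψ x t := by
  have hd1_add : d1 (fun x t => m x t + 2 * lam) = d1 m := by
    funext x t; exact deriv_add_const _
  have hd1_sub : d1 (fun x t => m x t - lam) = d1 m := by
    funext x t; exact deriv_sub_const _
  have hd2_sub : d2 (fun x t => m x t - lam) = d2 m := by
    funext x t; exact deriv_sub_const _
  have hW (x t : ℝ) : d2 ψ x t - twoLieHalfDensity (m · t + 2 * lam) (ψ · t) x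
      = d2 ψ x t - (2 * m x t + 4 * lam) * d1 ψ x t + d1 m x t * ψ x t := by
    simp only [twoLieHalfDensity, deriv_add_const', d1]
    ring
  have h := d1_d1_d2_sub_twoLieHalfDensity (b := fun x t => m x t + 2 * lam)
    (q := fun x t => m x t - lam) (hm.add contDiff_const)
    ((hm.differentiable three_ne_zero).sub_const lam) hψ hspec x t
  simp only [hW, hd1_add, hd1_sub, hd2_sub] at h
  linear_combination h

/-- if `m` solves KdV and `ψ_xx = (m − λ)ψ`, then
`W = ψ_t − (2m + 4λ)ψ_x + m_x·ψ` satisfies the same spectral equation. -/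
theorem KdV_Lax_compatibility (m ψ : ℝ → ℝ → ℝ) (lam : ℝ)
    (hm : Smooth2 m) (hψ : Smooth2 ψ)
    (hKdV : ∀ x t, d2 m x t + d1 (d1 (d1 m)) x t - 6 * m x t * d1 m x t = 0)
    (hspec : ∀ x t, d1 (d1 ψ) x t = (m x t - lam) * ψ x t) :
    ∀ x t,
      d1 (d1 (fun x t =>
          d2 ψ x t - (2 * m x t + 4 * lam) * d1 ψ x t + d1 m x t * ψ x t)) x t
        = (m x t - lam) *
          (d2 ψ x t - (2 * m x t + 4 * lam) * d1 ψ x t + d1 m x t * ψ x t) := by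
  intro x t
  rw [KdV_Lax_compatibility_general (contDiff_infty.1 hm 3) (contDiff_infty.1 hψ 3) hspec, hKdV,
    zero_mul, add_zero]
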